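/- arXiv:2405.04431 — 10 statements merged into one kernel-verified Lean document; each statement's English description precedes it below -/
import Mathlib

section
/- Let 0 ≤ α ≤ 1, 0 ≤ p_t ≤ 1, 0 ≤ β ≤ 1 and let V : ℕ × ℕ → ℝ have property (★). Then for all b ≥ 1 and all Δ⁺ ≥ Δ⁻ ≥ 1: DV(b,Δ⁺) ≤ DV(b,Δ⁻); that is, Δ ↦ DV(b,Δ) is nonincreasing on {1, 2, 3, …} for every b ≥ 1. -/
/-- One-step expected value of the idle action (`a = 0`) in the token-based AoII MDP:
`V⁰(b,Δ) = α·p_t·V(b+1,0) + α·(1−p_t)·V(b+1,Δ+1) + (1−α)·p_t·V(b,0) + (1−α)·(1−p_t)·V(b,Δ+1)`. -/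
def Vidle (α p_t : ℝ) (V : ℕ × ℕ → ℝ) (b Δ : ℕ) : ℝ :=
  α * p_t * V (b + 1, 0) + α * (1 - p_t) * V (b + 1, Δ + 1)
    + (1 - α) * p_t * V (b, 0) + (1 - α) * (1 - p_t) * V (b, Δ + 1)

/-- One-step expected value of the update action (`a = 1`) in the token-based AoII MDP:
`V¹(b,Δ) = α·β·V(b,0) + α·(1−β)·V(b,Δ+1) + (1−α)·β·V(b−1,0) + (1−α)·(1−β)·V(b−1,Δ+1)`. -/
def Vupd (α β : ℝ) (V : ℕ × ℕ → ℝ) (b Δ : ℕ) : ℝ :=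
  α * β * V (b, 0) + α * (1 - β) * V (b, Δ + 1)
    + (1 - α) * β * V (b - 1, 0) + (1 - α) * (1 - β) * V (b - 1, Δ + 1)

/-- `DV(b,Δ) = V¹(b,Δ) − V⁰(b,Δ)`. -/
def DV (α β p_t : ℝ) (V : ℕ × ℕ → ℝ) (b Δ : ℕ) : ℝ :=
  Vupd α β V b Δ - Vidle α p_t V b Δ

/-- Property (★): for all `b ≥ 1` and all `Δ⁺ ≥ Δ⁻ ≥ 2`,
`(1−β)·(V(b−1,Δ⁺) − V(b−1,Δ⁻)) − (1−p_t)·(V(b,Δ⁺) − V(b,Δ⁻)) ≤ 0`. -/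
def StarProp (β p_t : ℝ) (V : ℕ × ℕ → ℝ) : Prop :=
  ∀ b Δm Δp : ℕ, 1 ≤ b → 2 ≤ Δm → Δm ≤ Δp →
    (1 - β) * (V (b - 1, Δp) - V (b - 1, Δm)) - (1 - p_t) * (V (b, Δp) - V (b, Δm)) ≤ 0

/-- If `0 ≤ α ≤ 1`, `0 ≤ p_t ≤ 1`, `0 ≤ β ≤ 1` and `V` has property (★), then
`Δ ↦ DV(b,Δ)` is nonincreasing on `{1,2,3,…}` for every `b ≥ 1`. -/
theorem DV_antitone (α β p_t : ℝ) (V : ℕ × ℕ → ℝ)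
    (hα0 : 0 ≤ α) (hα1 : α ≤ 1) (hpt0 : 0 ≤ p_t) (hpt1 : p_t ≤ 1)
    (hβ0 : 0 ≤ β) (hβ1 : β ≤ 1) (hstar : StarProp β p_t V) :
    ∀ b Δm Δp : ℕ, 1 ≤ b → 1 ≤ Δm → Δm ≤ Δp →
      DV α β p_t V b Δp ≤ DV α β p_t V b Δm := by
  intro b Δm Δp hb hm hmp
  have h1 := hstar b (Δm + 1) (Δp + 1) hb (by omega) (by omega)
  have h2 := hstar (b + 1) (Δm + 1) (Δp + 1) (by omega) (by omega) (by omega)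
  rw [Nat.add_sub_cancel] at h2
  have h3 := mul_nonpos_of_nonneg_of_nonpos (sub_nonneg.mpr hα1) h1
  have h4 := mul_nonpos_of_nonneg_of_nonpos hα0 h2
  unfold DV Vupd Vidle
  linarith
end

section
/- Let 0 ≤ α ≤ 1, 0 ≤ p_t ≤ 1, 0 ≤ β ≤ 1 and let V : ℕ × ℕ → ℝ have property (★). Then the idle-action value function V⁰ also satisfies the (★)-type inequality: for all b ≥ 1 and all Δ⁺ ≥ Δ⁻ ≥ 2, (1−β)·(V⁰(b−1,Δ⁺) − V⁰(b−1,Δ⁻)) − (1−p_t)·(V⁰(b,Δ⁺) − V⁰(b,Δ⁻)) ≤ 0, where V⁰(0,Δ) is defined by the same formula as V⁰(b,Δ) with b = 0. -/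
/-- If `0 ≤ α ≤ 1`, `0 ≤ p_t ≤ 1`, `0 ≤ β ≤ 1` and `V` has property (★), then the
idle-action value function `V⁰` also satisfies the (★)-type inequality: for all `b ≥ 1`
and all `Δ⁺ ≥ Δ⁻ ≥ 2`,
`(1−β)·(V⁰(b−1,Δ⁺) − V⁰(b−1,Δ⁻)) − (1−p_t)·(V⁰(b,Δ⁺) − V⁰(b,Δ⁻)) ≤ 0`. -/
theorem Vidle_star (α β p_t : ℝ) (V : ℕ × ℕ → ℝ)
    (hα0 : 0 ≤ α) (hα1 : α ≤ 1) (hpt0 : 0 ≤ p_t) (hpt1 : p_t ≤ 1)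
    (hβ0 : 0 ≤ β) (hβ1 : β ≤ 1) (hstar : StarProp β p_t V) :
    ∀ b Δm Δp : ℕ, 1 ≤ b → 2 ≤ Δm → Δm ≤ Δp →
      (1 - β) * (Vidle α p_t V (b - 1) Δp - Vidle α p_t V (b - 1) Δm)
        - (1 - p_t) * (Vidle α p_t V b Δp - Vidle α p_t V b Δm) ≤ 0 := by
  intro b Δm Δp hb hm hmp
  obtain ⟨c, rfl⟩ : ∃ c, b = c + 1 := ⟨b - 1, by omega⟩
  have h1 := hstar (c + 1) (Δm + 1) (Δp + 1) (by omega) (by omega) (by omega)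
  have h2 := hstar (c + 1 + 1) (Δm + 1) (Δp + 1) (by omega) (by omega) (by omega)
  simp only [Nat.add_sub_cancel] at h1 h2 ⊢
  have k1 := mul_nonpos_of_nonneg_of_nonpos
    (mul_nonneg (sub_nonneg.2 hα1) (sub_nonneg.2 hpt1)) h1
  have k2 := mul_nonpos_of_nonneg_of_nonpos
    (mul_nonneg hα0 (sub_nonneg.2 hpt1)) h2
  unfold Vidle
  linarith
end

section
/- Let 0 ≤ α ≤ 1, 0 ≤ p_t ≤ 1, 0 ≤ β ≤ 1 and let V : ℕ × ℕ → ℝ have property (★). Then the update-action value function V¹ also satisfies the (★)-type inequality: for all b ≥ 2 and all Δ⁺ ≥ Δ⁻ ≥ 2, (1−β)·(V¹(b−1,Δ⁺) − V¹(b−1,Δ⁻)) − (1−p_t)·(V¹(b,Δ⁺) − V¹(b,Δ⁻)) ≤ 0. -/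
/-- If `0 ≤ α ≤ 1`, `0 ≤ p_t ≤ 1`, `0 ≤ β ≤ 1` and `V` has property (★), then the
update-action value function `V¹` also satisfies the (★)-type inequality: for all `b ≥ 2`
and all `Δ⁺ ≥ Δ⁻ ≥ 2`,
`(1−β)·(V¹(b−1,Δ⁺) − V¹(b−1,Δ⁻)) − (1−p_t)·(V¹(b,Δ⁺) − V¹(b,Δ⁻)) ≤ 0`. -/
theorem Vupd_star (α β p_t : ℝ) (V : ℕ × ℕ → ℝ)
    (hα0 : 0 ≤ α) (hα1 : α ≤ 1) (hpt0 : 0 ≤ p_t) (hpt1 : p_t ≤ 1)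
    (hβ0 : 0 ≤ β) (hβ1 : β ≤ 1) (hstar : StarProp β p_t V) :
    ∀ b Δm Δp : ℕ, 2 ≤ b → 2 ≤ Δm → Δm ≤ Δp →
      (1 - β) * (Vupd α β V (b - 1) Δp - Vupd α β V (b - 1) Δm)
        - (1 - p_t) * (Vupd α β V b Δp - Vupd α β V b Δm) ≤ 0 := by
  intro b Δm Δp hb hm hmp
  have h1 := hstar b (Δm + 1) (Δp + 1) (by omega) (by omega) (by omega)
  have h2 := hstar (b - 1) (Δm + 1) (Δp + 1) (by omega) (by omega) (by omega)
  have k1 := mul_nonneg (mul_nonneg hα0 (sub_nonneg.2 hβ1)) (neg_nonneg.2 h1)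
  have k2 := mul_nonneg (mul_nonneg (sub_nonneg.2 hα1) (sub_nonneg.2 hβ1)) (neg_nonneg.2 h2)
  unfold Vupd
  linarith
end

section
/- Let 0 ≤ α ≤ 1, 0 ≤ p_t ≤ 1, 0 ≤ β ≤ 1 and let V : ℕ × ℕ → ℝ have property (★). Then for all b ≥ 2 and all Δ⁺ ≥ Δ⁻ ≥ 2: (1−β)·( min{V⁰(b−1,Δ⁺), V¹(b−1,Δ⁺)} − min{V⁰(b−1,Δ⁻), V¹(b−1,Δ⁻)} ) − (1−p_t)·( min{V⁰(b,Δ⁺), V¹(b,Δ⁺)} − min{V⁰(b,Δ⁻), V¹(b,Δ⁻)} ) ≤ 0. -/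
/-- If `0 ≤ α ≤ 1`, `0 ≤ p_t ≤ 1`, `0 ≤ β ≤ 1` and `V` has property (★), then for all
`b ≥ 2` and all `Δ⁺ ≥ Δ⁻ ≥ 2`:
`(1−β)·(min{V⁰(b−1,Δ⁺),V¹(b−1,Δ⁺)} − min{V⁰(b−1,Δ⁻),V¹(b−1,Δ⁻)})
  − (1−p_t)·(min{V⁰(b,Δ⁺),V¹(b,Δ⁺)} − min{V⁰(b,Δ⁻),V¹(b,Δ⁻)}) ≤ 0`. -/
theorem min_star (α β p_t : ℝ) (V : ℕ × ℕ → ℝ)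
    (hα0 : 0 ≤ α) (hα1 : α ≤ 1) (hpt0 : 0 ≤ p_t) (hpt1 : p_t ≤ 1)
    (hβ0 : 0 ≤ β) (hβ1 : β ≤ 1) (hstar : StarProp β p_t V) :
    ∀ b Δm Δp : ℕ, 2 ≤ b → 2 ≤ Δm → Δm ≤ Δp →
      (1 - β) * (min (Vidle α p_t V (b - 1) Δp) (Vupd α β V (b - 1) Δp)
                  - min (Vidle α p_t V (b - 1) Δm) (Vupd α β V (b - 1) Δm))
        - (1 - p_t) * (min (Vidle α p_t V b Δp) (Vupd α β V b Δp)
                  - min (Vidle α p_t V b Δm) (Vupd α β V b Δm)) ≤ 0 := by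
  intro b Δm Δp hb hm hmp
  obtain ⟨c, rfl⟩ : ∃ c, b = c + 2 := ⟨b - 2, by omega⟩
  have h1 := hstar (c + 1) (Δm + 1) (Δp + 1) (by omega) (by omega) (by omega)
  have h2 := hstar (c + 2) (Δm + 1) (Δp + 1) (by omega) (by omega) (by omega)
  have h3 := hstar (c + 3) (Δm + 1) (Δp + 1) (by omega) (by omega) (by omega)
  have e1 : c + 2 - 1 = c + 1 := rfl
  have e3 : c + 3 - 1 = c + 2 := rfl
  have e2 : c + 1 - 1 = c := rfl
  rw [e2] at h1
  rw [e1] at h2 ⊢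
  rw [e3] at h3
  have key : ∀ x y z w : ℝ, y - w ≤ x - z → min x y - min z w ≤ x - z := by
    intro x y z w h
    rcases min_choice z w with hz | hz <;> rw [hz]
    · linarith [min_le_left x y]
    · linarith [min_le_right x y]
  have key2 : ∀ x y z w : ℝ, y - w ≤ x - z → y - w ≤ min x y - min z w := by
    intro x y z w h
    rcases min_choice x y with hz | hz <;> rw [hz]
    · linarith [min_le_left z w]
    · linarith [min_le_right z w]
  have hα : 0 ≤ 1 - α := by linarith
  have k1 := key (Vidle α p_t V (c + 1) Δp) (Vupd α β V (c + 1) Δp)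
    (Vidle α p_t V (c + 1) Δm) (Vupd α β V (c + 1) Δm) (by
      have a1 := mul_le_mul_of_nonneg_left h2 hα0
      have a2 := mul_le_mul_of_nonneg_left h1 hα
      simp only [Vidle, Vupd, e2]
      linarith)
  have k2 := key2 (Vidle α p_t V (c + 2) Δp) (Vupd α β V (c + 2) Δp)
    (Vidle α p_t V (c + 2) Δm) (Vupd α β V (c + 2) Δm) (by
      have a1 := mul_le_mul_of_nonneg_left h3 hα0
      have a2 := mul_le_mul_of_nonneg_left h2 hα
      simp only [Vidle, Vupd, e1]
      linarith)
  have m1 := mul_le_mul_of_nonneg_left k1 (sub_nonneg.2 hβ1)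
  have m2 := mul_le_mul_of_nonneg_left k2 (sub_nonneg.2 hpt1)
  have e : (1 - β) * (Vidle α p_t V (c + 1) Δp - Vidle α p_t V (c + 1) Δm)
      = (1 - p_t) * (Vupd α β V (c + 2) Δp - Vupd α β V (c + 2) Δm) := by
    simp only [Vidle, Vupd, e1]
    ring
  linarith
end

section
/- Let 0 ≤ α ≤ 1 and 0 ≤ p_t ≤ β ≤ 1, and let V : ℕ × ℕ → ℝ have property (★). Define the value-iteration update TV : ℕ × ℕ → ℝ on ages Δ ≥ 1 by TV(b,Δ) = Δ + min{V⁰(b,Δ), V¹(b,Δ)} for b ≥ 1, and TV(0,Δ) = Δ + V⁰(0,Δ) (the update action is infeasible when no token is available). Then TV also has property (★): for all b ≥ 1 and all Δ⁺ ≥ Δ⁻ ≥ 2, (1−β)·(TV(b−1,Δ⁺) − TV(b−1,Δ⁻)) − (1−p_t)·(TV(b,Δ⁺) − TV(b,Δ⁻)) ≤ 0. -/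
/-- The value-iteration update of the token-based AoII MDP:
`TV(b,Δ) = Δ + min{V⁰(b,Δ), V¹(b,Δ)}` for `b ≥ 1`, and `TV(0,Δ) = Δ + V⁰(0,Δ)`
(the update action is infeasible when no token is available). -/
noncomputable def TV (α β p_t : ℝ) (V : ℕ × ℕ → ℝ) : ℕ × ℕ → ℝ := fun s =>
  if s.1 = 0 then (s.2 : ℝ) + Vidle α p_t V 0 s.2
  else (s.2 : ℝ) + min (Vidle α p_t V s.1 s.2) (Vupd α β V s.1 s.2)

/-- The increment of a minimum lies between the two increments. -/
theorem min_incr_bounds (i i' u u' : ℝ) (h : u - u' ≤ i - i') :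
    u - u' ≤ min i u - min i' u' ∧ min i u - min i' u' ≤ i - i' := by
  constructor
  · rcases min_cases i u with h1 | h1 <;>
      linarith [min_le_left i' u', min_le_right i' u']
  · rcases min_cases i' u' with h1 | h1 <;>
      linarith [min_le_left i u, min_le_right i u]

/-- By (★), the update increment is at most the idle increment. -/
theorem upd_incr_le_idle_incr (α β p_t : ℝ) (V : ℕ × ℕ → ℝ)
    (hα0 : 0 ≤ α) (hα1 : α ≤ 1) (hstar : StarProp β p_t V)
    (b m p : ℕ) (hb : 1 ≤ b) (hm : 2 ≤ m) (hmp : m ≤ p) :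
    Vupd α β V b p - Vupd α β V b m ≤ Vidle α p_t V b p - Vidle α p_t V b m := by
  have h1 := hstar b (m + 1) (p + 1) hb (by omega) (by omega)
  have h2 := hstar (b + 1) (m + 1) (p + 1) (by omega) (by omega) (by omega)
  rw [Nat.add_sub_cancel] at h2
  have h3 := mul_nonpos_of_nonneg_of_nonpos (sub_nonneg.2 hα1) h1
  have h4 := mul_nonpos_of_nonneg_of_nonpos hα0 h2
  unfold Vupd Vidle
  linarith

/-- If `0 ≤ α ≤ 1`, `0 ≤ p_t ≤ β ≤ 1` and `V` has property (★), then the value-iteration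
update `TV` also has property (★). -/
theorem TV_star (α β p_t : ℝ) (V : ℕ × ℕ → ℝ)
    (hα0 : 0 ≤ α) (hα1 : α ≤ 1) (hpt0 : 0 ≤ p_t) (hptβ : p_t ≤ β) (hβ1 : β ≤ 1)
    (hstar : StarProp β p_t V) :
    StarProp β p_t (TV α β p_t V) := by
  intro b m p hb hm hmp
  obtain ⟨c, rfl⟩ : ∃ c, b = c + 1 := ⟨b - 1, by omega⟩
  have hmp' : (m : ℝ) ≤ p := by exact_mod_cast hmp
  have hr : 0 ≤ 1 - β := by linarith
  have hq : 0 ≤ 1 - p_t := by linarith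
  rw [Nat.add_sub_cancel]
  -- upper bound for the increment at `c`
  have hup : TV α β p_t V (c, p) - TV α β p_t V (c, m)
      ≤ (p - m) + (Vidle α p_t V c p - Vidle α p_t V c m) := by
    unfold TV
    by_cases hc : c = 0
    · subst hc
      simp only [if_true]
      linarith
    · simp only [if_neg hc]
      have := (min_incr_bounds _ _ _ _ (upd_incr_le_idle_incr α β p_t V hα0 hα1 hstar c m p
        (by omega) hm hmp)).2
      linarith
  -- lower bound for the increment at `c + 1`
  have hlo : (p - m) + (Vupd α β V (c + 1) p - Vupd α β V (c + 1) m)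
      ≤ TV α β p_t V (c + 1, p) - TV α β p_t V (c + 1, m) := by
    unfold TV
    simp only [if_neg (Nat.succ_ne_zero c)]
    have := (min_incr_bounds _ _ _ _ (upd_incr_le_idle_incr α β p_t V hα0 hα1 hstar (c + 1) m p
      hb hm hmp)).1
    linarith
  have hkey : (1 - β) * (Vidle α p_t V c p - Vidle α p_t V c m)
      = (1 - p_t) * (Vupd α β V (c + 1) p - Vupd α β V (c + 1) m) := by
    unfold Vidle Vupd
    rw [Nat.add_sub_cancel]
    ring
  have h1 := mul_le_mul_of_nonneg_left hup hr
  have h2 := mul_le_mul_of_nonneg_left hlo hq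
  have h3 : (1 - β) * ((p : ℝ) - m) ≤ (1 - p_t) * ((p : ℝ) - m) :=
    mul_le_mul_of_nonneg_right (by linarith) (by linarith)
  rw [mul_add] at h1 h2
  linarith
end

section
/- Let 0 ≤ α ≤ 1, 0 ≤ p_t ≤ β ≤ 1 and 0 ≤ p_R ≤ 1. Define the value-iteration sequence V_0, V_1, V_2, … : ℕ × ℕ → ℝ by V_0 ≡ 0 and, for each k: V_{k+1}(b,Δ) = Δ + min{V⁰_{k+1}(b,Δ), V¹_{k+1}(b,Δ)} for b ≥ 1 and Δ ≥ 1; V_{k+1}(0,Δ) = Δ + V⁰_{k+1}(0,Δ) for Δ ≥ 1; and for Δ = 0, V_{k+1}(b,0) = min{ α·(p_R·V_k(b+1,0) + (1−p_R)·V_k(b+1,1)) + (1−α)·(p_R·V_k(b,0) + (1−p_R)·V_k(b,1)), α·(p_R·V_k(b,0) + (1−p_R)·V_k(b,1)) + (1−α)·(p_R·V_k(b−1,0) + (1−p_R)·V_k(b−1,1)) } for b ≥ 1, and V_{k+1}(0,0) = α·(p_R·V_k(1,0) + (1−p_R)·V_k(1,1)) + (1−α)·(p_R·V_k(0,0) +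 (1−p_R)·V_k(0,1)), where V⁰_{k+1} and V¹_{k+1} are the action value functions built from V_k. Then for every k ≥ 0: (i) each V_k has property (★); (ii) DV_{k+1}(b,Δ) := V¹_{k+1}(b,Δ) − V⁰_{k+1}(b,Δ) is nonincreasing in Δ on {1, 2, 3, …} for every b ≥ 1; and (iii) for every b ≥ 1 the set {Δ ≥ 1 : DV_{k+1}(b,Δ) < 0} is upward closed, i.e., the value-iteration greedy policy that transmits exactly when DV_{k+1}(b,Δ) < 0 is a threshold policy in the age Δ. -/
/-- One-step expected value of the idle action at a synchronized state (`Δ = 0`):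
`α·(p_R·V(b+1,0) + (1−p_R)·V(b+1,1)) + (1−α)·(p_R·V(b,0) + (1−p_R)·V(b,1))`. -/
def Widle (α p_R : ℝ) (V : ℕ × ℕ → ℝ) (b : ℕ) : ℝ :=
  α * (p_R * V (b + 1, 0) + (1 - p_R) * V (b + 1, 1))
    + (1 - α) * (p_R * V (b, 0) + (1 - p_R) * V (b, 1))

/-- One-step expected value of the update action at a synchronized state (`Δ = 0`):
`α·(p_R·V(b,0) + (1−p_R)·V(b,1)) + (1−α)·(p_R·V(b−1,0) + (1−p_R)·V(b−1,1))`. -/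
def Wupd (α p_R : ℝ) (V : ℕ × ℕ → ℝ) (b : ℕ) : ℝ :=
  α * (p_R * V (b, 0) + (1 - p_R) * V (b, 1))
    + (1 - α) * (p_R * V (b - 1, 0) + (1 - p_R) * V (b - 1, 1))

/-- The value-iteration sequence of the token-based AoII MDP: `V_0 ≡ 0` and
`V_{k+1}(b,Δ) = Δ + min{V⁰_{k+1}(b,Δ), V¹_{k+1}(b,Δ)}` for `b ≥ 1`, `Δ ≥ 1`;
`V_{k+1}(0,Δ) = Δ + V⁰_{k+1}(0,Δ)` for `Δ ≥ 1`; and at `Δ = 0` the corresponding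
expressions with staying probability `p_R`. -/
noncomputable def Vit (α β p_t p_R : ℝ) : ℕ → ℕ × ℕ → ℝ
  | 0 => fun _ => 0
  | (k + 1) => fun s =>
      if s.2 = 0 then
        (if s.1 = 0 then Widle α p_R (Vit α β p_t p_R k) 0
         else min (Widle α p_R (Vit α β p_t p_R k) s.1)
                  (Wupd α p_R (Vit α β p_t p_R k) s.1))
      else
        (if s.1 = 0 then (s.2 : ℝ) + Vidle α p_t (Vit α β p_t p_R k) 0 s.2
         else (s.2 : ℝ) + min (Vidle α p_t (Vit α β p_t p_R k) s.1 s.2)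
                              (Vupd α β (Vit α β p_t p_R k) s.1 s.2))

/-- Under property (★) the difference `DV` is nonincreasing in the age. -/
theorem DV_antitone_aux (α β p_t : ℝ) (hα0 : 0 ≤ α) (hα1 : α ≤ 1) (V : ℕ × ℕ → ℝ)
    (h : StarProp β p_t V) (b Δm Δp : ℕ) (hb : 1 ≤ b) (hm : 1 ≤ Δm) (hmp : Δm ≤ Δp) :
    DV α β p_t V b Δp ≤ DV α β p_t V b Δm := by
  have h1 := h b (Δm + 1) (Δp + 1) hb (by omega) (by omega)
  have h2 := h (b + 1) (Δm + 1) (Δp + 1) (by omega) (by omega) (by omega)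
  simp only [Nat.add_sub_cancel] at h2
  have h3 := mul_le_mul_of_nonneg_left h1 (sub_nonneg.2 hα1)
  have h4 := mul_le_mul_of_nonneg_left h2 hα0
  unfold DV Vupd Vidle
  linarith

/-- Property (★) is preserved by one step of value iteration. -/
theorem StarProp_step (α β p_t p_R : ℝ) (hα0 : 0 ≤ α) (hα1 : α ≤ 1)
    (hptβ : p_t ≤ β) (hβ1 : β ≤ 1) (k : ℕ)
    (h : StarProp β p_t (Vit α β p_t p_R k)) : StarProp β p_t (Vit α β p_t p_R (k + 1)) := by
  intro b Δm Δp hb hm hmp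
  obtain ⟨c, rfl⟩ : ∃ c, b = c + 1 := ⟨b - 1, by omega⟩
  simp only [Nat.add_sub_cancel]
  have hV : ∀ Δ : ℕ, 2 ≤ Δ → Vit α β p_t p_R (k + 1) (c + 1, Δ) = (Δ : ℝ) +
      min (Vidle α p_t (Vit α β p_t p_R k) (c + 1) Δ)
        (Vupd α β (Vit α β p_t p_R k) (c + 1) Δ) := by
    intro Δ hΔ
    have : Δ ≠ 0 := by omega
    simp [Vit, this]
  have key := fun b hb => DV_antitone_aux α β p_t hα0 hα1 _ h b Δm Δp hb (by omega) hmp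
  unfold DV at key
  have hδ : (Δm : ℝ) ≤ Δp := by exact_mod_cast hmp
  -- upper bound at `c`
  have hup : Vit α β p_t p_R (k + 1) (c, Δp) - Vit α β p_t p_R (k + 1) (c, Δm) ≤
      ((Δp : ℝ) - Δm) + (Vidle α p_t (Vit α β p_t p_R k) c Δp
        - Vidle α p_t (Vit α β p_t p_R k) c Δm) := by
    have hp0 : Δp ≠ 0 := by omega
    have hm0 : Δm ≠ 0 := by omega
    rcases Nat.eq_zero_or_pos c with rfl | hc
    · simp only [Vit, hp0, hm0, if_true, if_false]
      linarith
    · have hc0 : c ≠ 0 := by omega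
      simp only [Vit, hp0, hm0, hc0, if_false]
      have := key c hc
      rcases min_cases (Vidle α p_t (Vit α β p_t p_R k) c Δm)
        (Vupd α β (Vit α β p_t p_R k) c Δm) with ⟨e, _⟩ | ⟨e, _⟩ <;> rw [e]
      · linarith [min_le_left (Vidle α p_t (Vit α β p_t p_R k) c Δp)
          (Vupd α β (Vit α β p_t p_R k) c Δp)]
      · linarith [min_le_right (Vidle α p_t (Vit α β p_t p_R k) c Δp)
          (Vupd α β (Vit α β p_t p_R k) c Δp)]
  -- lower bound at `c + 1`
  have hlo : ((Δp : ℝ) - Δm) + (Vupd α β (Vit α β p_t p_R k) (c + 1) Δp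
        - Vupd α β (Vit α β p_t p_R k) (c + 1) Δm) ≤
      Vit α β p_t p_R (k + 1) (c + 1, Δp) - Vit α β p_t p_R (k + 1) (c + 1, Δm) := by
    rw [hV Δp (by omega), hV Δm hm]
    have := key (c + 1) (by omega)
    have h1 := min_le_left (Vidle α p_t (Vit α β p_t p_R k) (c + 1) Δm)
        (Vupd α β (Vit α β p_t p_R k) (c + 1) Δm)
    have h2 := min_le_right (Vidle α p_t (Vit α β p_t p_R k) (c + 1) Δm)
        (Vupd α β (Vit α β p_t p_R k) (c + 1) Δm)
    rcases min_cases (Vidle α p_t (Vit α β p_t p_R k) (c + 1) Δp)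
        (Vupd α β (Vit α β p_t p_R k) (c + 1) Δp) with ⟨e, _⟩ | ⟨e, _⟩ <;> rw [e] <;> linarith
  have e1 := mul_le_mul_of_nonneg_left hup (sub_nonneg.2 hβ1)
  have e2 := mul_le_mul_of_nonneg_left hlo (sub_nonneg.2 (hptβ.trans hβ1))
  have e3 := mul_nonneg (sub_nonneg.2 hptβ) (sub_nonneg.2 hδ)
  have e4 : (1 - β) * (Vidle α p_t (Vit α β p_t p_R k) c Δp
        - Vidle α p_t (Vit α β p_t p_R k) c Δm) =
      (1 - p_t) * (Vupd α β (Vit α β p_t p_R k) (c + 1) Δp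
        - Vupd α β (Vit α β p_t p_R k) (c + 1) Δm) := by
    simp only [Vidle, Vupd, Nat.add_sub_cancel]
    ring
  linarith

/-- Theorem 1 of the paper, via value iteration: if `0 ≤ α ≤ 1`, `0 ≤ p_t ≤ β ≤ 1` and
`0 ≤ p_R ≤ 1`, then (i) every iterate `V_k` has property (★); (ii) for every `b ≥ 1`,
`Δ ↦ DV_{k+1}(b,Δ) = V¹_{k+1}(b,Δ) − V⁰_{k+1}(b,Δ)` is nonincreasing on `{1,2,3,…}`;
and (iii) for every `b ≥ 1` the set `{Δ ≥ 1 : DV_{k+1}(b,Δ) < 0}` is upward closed, i.e.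
the value-iteration greedy policy is a threshold policy in the age `Δ`. -/
theorem Vit_threshold (α β p_t p_R : ℝ)
    (hα0 : 0 ≤ α) (hα1 : α ≤ 1) (hpt0 : 0 ≤ p_t) (hptβ : p_t ≤ β) (hβ1 : β ≤ 1)
    (hpR0 : 0 ≤ p_R) (hpR1 : p_R ≤ 1) :
    (∀ k : ℕ, StarProp β p_t (Vit α β p_t p_R k))
    ∧ (∀ k b Δm Δp : ℕ, 1 ≤ b → 1 ≤ Δm → Δm ≤ Δp →
        DV α β p_t (Vit α β p_t p_R k) b Δp ≤ DV α β p_t (Vit α β p_t p_R k) b Δm)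
    ∧ (∀ k b Δm Δp : ℕ, 1 ≤ b → 1 ≤ Δm → Δm ≤ Δp →
        DV α β p_t (Vit α β p_t p_R k) b Δm < 0 →
        DV α β p_t (Vit α β p_t p_R k) b Δp < 0) := by
  have hs : ∀ k : ℕ, StarProp β p_t (Vit α β p_t p_R k) := by
    intro k
    induction k with
    | zero => intro b Δm Δp _ _ _; simp [Vit]
    | succ k ih => exact StarProp_step α β p_t p_R hα0 hα1 hptβ hβ1 k ih
  refine ⟨hs, fun k b Δm Δp hb hm hmp => DV_antitone_aux α β p_t hα0 hα1 _ (hs k) b Δm Δp hb hm hmp,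
    fun k b Δm Δp hb hm hmp hlt => ?_⟩
  exact (DV_antitone_aux α β p_t hα0 hα1 _ (hs k) b Δm Δp hb hm hmp).trans_lt hlt
end

section
/- Let b_max ≥ 1 and Δ_max ≥ 1 be integers and let α, p_R, p_t, β ∈ (0,1) be reals. Consider the finite Markov chain on the state space S = {0,…,b_max} × {0,…,Δ_max} with transition matrix Q defined as follows. In state (b,Δ), the action a is chosen uniformly from {0,1} if b ≥ 1 and is a = 0 if b = 0. Given a, the next state (b',Δ') has independent components: b' = min(b − a + 1, b_max) with probability α and b' = b − a with probability 1 − α; if Δ = 0 then Δ' = 0 with probability p_R and Δ' = 1 with probability 1 − p_R (for either action); if Δ ≥ 1 and a = 0 then Δ' = 0 with probability p_t and Δ' = min(Δ+1, Δ_max) with probability 1 − p_t; if Δ ≥ 1 and a = 1 then Δ' = 0 with probability β and Δ' = min(Δ+1, Δ_max) with probability 1 − β. Then the chain is irreducible: for every pair of states s, s' ∈ S there exists n ≥ 1 such that the (s,s') entry of Qⁿ is strictly positive. -/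
/-- Transition matrix of the token-based AoII Markov chain on
`{0,…,b_max} × {0,…,Δ_max}` induced by the stationary policy that randomizes uniformly
over the feasible actions (`a ∈ {0,1}` uniformly if `b ≥ 1`, `a = 0` if `b = 0`):
tokens arrive with probability `α` (token count capped at `b_max`), an update consumes a
token; if `Δ = 0` the next age is `0` w.p. `p_R` and `1` w.p. `1 − p_R`; if `Δ ≥ 1` the
next age is `0` w.p. `p_t` (idle) or `β` (update), and `min(Δ+1, Δ_max)` otherwise. -/
noncomputable def aoiiKernel (bmax Δmax : ℕ) (α p_R p_t β : ℝ) :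
    Matrix (Fin (bmax + 1) × Fin (Δmax + 1)) (Fin (bmax + 1) × Fin (Δmax + 1)) ℝ :=
  fun s s' =>
    let b : ℕ := s.1; let Δ : ℕ := s.2; let b' : ℕ := s'.1; let Δ' : ℕ := s'.2
    let Pb : ℕ → ℝ := fun a =>
      (if b' = min (b - a + 1) bmax then α else 0) + (if b' = b - a then 1 - α else 0)
    let PΔ : ℕ → ℝ := fun a =>
      if Δ = 0 then (if Δ' = 0 then p_R else 0) + (if Δ' = 1 then 1 - p_R else 0)
      else
        (if Δ' = 0 then (if a = 1 then β else p_t) else 0)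
          + (if Δ' = min (Δ + 1) Δmax then (if a = 1 then 1 - β else 1 - p_t) else 0)
    if b = 0 then Pb 0 * PΔ 0
    else (1 / 2) * (Pb 0 * PΔ 0) + (1 / 2) * (Pb 1 * PΔ 1)

theorem aoii_aux (bmax Δmax : ℕ) (hΔ : 1 ≤ Δmax) (α p_R p_t β : ℝ)
    (hα : 0 < α) (hα1 : α < 1) (hpR : 0 < p_R) (hpR1 : p_R < 1)
    (hpt : 0 < p_t) (hpt1 : p_t < 1) (hβ : 0 < β) (hβ1 : β < 1)
    (s s' : Fin (bmax + 1) × Fin (Δmax + 1)) :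
    0 ≤ aoiiKernel bmax Δmax α p_R p_t β s s' ∧
    ((((s'.1 : ℕ) = s.1 ∨ (s'.1 : ℕ) = s.1 + 1 ∨ (s'.1 : ℕ) + 1 = s.1) ∧ (s'.2 : ℕ) = 0) ∨
      ((s'.1 : ℕ) = s.1 ∧ (s'.2 : ℕ) = s.2 + 1) →
      0 < aoiiKernel bmax Δmax α p_R p_t β s s') := by
  obtain ⟨⟨b, hb⟩, ⟨d, hd⟩⟩ := s
  obtain ⟨⟨b', hb'⟩, ⟨d', hd'⟩⟩ := s'
  have h1 : 0 < 1 - α := by linarith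
  have h2 : 0 < 1 - p_R := by linarith
  have h3 : 0 < 1 - p_t := by linarith
  have h4 : 0 < 1 - β := by linarith
  let Pb : ℕ → ℝ := fun a =>
      (if b' = min (b - a + 1) bmax then α else 0) + (if b' = b - a then 1 - α else 0)
  let PΔ : ℕ → ℝ := fun a =>
      if d = 0 then (if d' = 0 then p_R else 0) + (if d' = 1 then 1 - p_R else 0)
      else
        (if d' = 0 then (if a = 1 then β else p_t) else 0)
          + (if d' = min (d + 1) Δmax then (if a = 1 then 1 - β else 1 - p_t) else 0)
  have hQ : aoiiKernel bmax Δmax α p_R p_t β (⟨b, hb⟩, ⟨d, hd⟩) (⟨b', hb'⟩, ⟨d', hd'⟩) =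
    if b = 0 then Pb 0 * PΔ 0 else (1 / 2) * (Pb 0 * PΔ 0) + (1 / 2) * (Pb 1 * PΔ 1) := rfl
  have nb : ∀ a, 0 ≤ Pb a := by
    intro a; simp only [Pb]; positivity
  have nd : ∀ a, 0 ≤ PΔ a := by
    intro a; simp only [PΔ]; split_ifs <;> linarith
  have pb0 : b' = b ∨ b' = b + 1 → 0 < Pb 0 := by
    intro h; simp only [Pb]
    rcases h with h | h
    · rw [if_pos (show b' = b - 0 by omega)]; split_ifs <;> linarith
    · rw [if_pos (show b' = min (b - 0 + 1) bmax by omega)]; split_ifs <;> linarith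
  have pb1 : b' + 1 = b → 0 < Pb 1 := by
    intro h; simp only [Pb]
    rw [if_pos (show b' = b - 1 by omega)]; split_ifs <;> linarith
  have pd : ∀ a, d' = 0 ∨ d' = d + 1 → 0 < PΔ a := by
    intro a h; simp only [PΔ]
    by_cases h0 : d = 0
    · rw [if_pos h0]
      split_ifs <;> first | linarith | omega
    · rw [if_neg h0]
      split_ifs <;> first | linarith | omega
  rw [hQ]
  have m0 := mul_nonneg (nb 0) (nd 0)
  have m1 := mul_nonneg (nb 1) (nd 1)
  refine ⟨by split_ifs <;> linarith, ?_⟩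
  intro h
  simp only at h
  have hd0 : d' = 0 ∨ d' = d + 1 := by omega
  by_cases hh : b' + 1 = b
  · have := mul_pos (pb1 hh) (pd 1 hd0)
    rw [if_neg (by omega)]; linarith
  · have := mul_pos (pb0 (by omega)) (pd 0 hd0)
    split_ifs <;> linarith

/-- Proposition 1 of the paper: for `b_max ≥ 1`, `Δ_max ≥ 1` and
`α, p_R, p_t, β ∈ (0,1)`, the token-based AoII chain under the uniformly randomized
stationary policy is irreducible: every state `s'` is reachable from every state `s`,
i.e. some power of the transition matrix has a strictly positive `(s,s')` entry. -/
theorem aoiiKernel_irreducible (bmax Δmax : ℕ) (hb : 1 ≤ bmax) (hΔ : 1 ≤ Δmax)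
    (α p_R p_t β : ℝ)
    (hα : 0 < α) (hα1 : α < 1) (hpR : 0 < p_R) (hpR1 : p_R < 1)
    (hpt : 0 < p_t) (hpt1 : p_t < 1) (hβ : 0 < β) (hβ1 : β < 1) :
    ∀ s s' : Fin (bmax + 1) × Fin (Δmax + 1),
      ∃ n : ℕ, 1 ≤ n ∧ 0 < (aoiiKernel bmax Δmax α p_R p_t β ^ n) s s' := by
  have aux := aoii_aux bmax Δmax hΔ α p_R p_t β hα hα1 hpR hpR1 hpt hpt1 hβ hβ1
  generalize aoiiKernel bmax Δmax α p_R p_t β = Q at aux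
  have hpow : ∀ n s s', 0 ≤ (Q ^ n) s s' := by
    intro n
    induction n with
    | zero => intro s s'; rw [pow_zero, Matrix.one_apply]; split_ifs <;> norm_num
    | succ n ih =>
      intro s s'
      rw [pow_succ, Matrix.mul_apply]
      exact Finset.sum_nonneg fun x _ => mul_nonneg (ih s x) (aux x s').1
  have step : ∀ n s x s', 0 < (Q ^ n) s x → 0 < Q x s' → 0 < (Q ^ (n + 1)) s s' := by
    intro n s x s' h1 h2
    rw [pow_succ, Matrix.mul_apply]
    exact Finset.sum_pos' (fun y _ => mul_nonneg (hpow n s y) (aux y s').1)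
      ⟨x, Finset.mem_univ _, mul_pos h1 h2⟩
  intro s s'
  have start : ∃ n : ℕ, 1 ≤ n ∧ 0 < (Q ^ n) s (s.1, 0) :=
    ⟨1, le_rfl, by rw [pow_one]; exact (aux _ _).2 (Or.inl ⟨Or.inl rfl, rfl⟩)⟩
  have tokens : ∀ k : ℕ, ∀ c : Fin (bmax + 1),
      ((c : ℕ) = s.1 + k ∨ (c : ℕ) + k = s.1) → ∃ n : ℕ, 1 ≤ n ∧ 0 < (Q ^ n) s (c, 0) := by
    intro k
    induction k with
    | zero =>
      intro c hc
      have : c = s.1 := Fin.ext (by omega)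
      rw [this]; exact start
    | succ k ih =>
      intro c hc
      have hs := s.1.isLt
      have hcl := c.isLt
      rcases hc with hc | hc
      · obtain ⟨n, hn, h⟩ := ih ⟨s.1 + k, by omega⟩ (Or.inl rfl)
        refine ⟨n + 1, by omega, step n s _ _ h ((aux _ _).2 (Or.inl ⟨?_, rfl⟩))⟩
        right; left; simp only; omega
      · obtain ⟨n, hn, h⟩ := ih ⟨c + 1, by omega⟩ (Or.inr (by simp only; omega))
        refine ⟨n + 1, by omega, step n s _ _ h ((aux _ _).2 (Or.inl ⟨?_, rfl⟩))⟩
        right; right; rfl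
  have age : ∀ k : ℕ, ∀ hk : k < Δmax + 1,
      ∃ n : ℕ, 1 ≤ n ∧ 0 < (Q ^ n) s (s'.1, ⟨k, hk⟩) := by
    intro k
    induction k with
    | zero =>
      intro _
      rcases le_total (s.1 : ℕ) (s'.1 : ℕ) with h | h
      · exact tokens (s'.1 - s.1) s'.1 (by omega)
      · exact tokens (s.1 - s'.1) s'.1 (by omega)
    | succ k ih =>
      intro hk
      obtain ⟨n, hn, h⟩ := ih (by omega)
      exact ⟨n + 1, by omega, step n s _ _ h ((aux _ _).2 (Or.inr ⟨rfl, rfl⟩))⟩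
  exact age s'.2 s'.2.isLt
end

section
/- Let b_max ≥ 1 and Δ_max ≥ 1 be integers and let α_min, α_max, q ∈ (0,1) be reals. Consider the finite Markov chain on the state space S = {0,…,b_max}² × {1,…,Δ_max} × {0,1} with transition matrix Q defined as follows. In state (b₀,b₁,Δ,r), the update action a = 1 is feasible iff (r = 0 and b₀ ≥ 1) or (r = 1 and b₁ ≥ 1), the idle action a = 0 is always feasible, and the action is chosen uniformly among the feasible actions. Given a, the next state (b₀',b₁',Δ',r') has: Δ' = 1 if a = 1 and Δ' = min(Δ+1, Δ_max) if a = 0; r' = 1 with probability q and r' = 0 with probability 1 − q, independently of everything else; if r = 0 then b₁' = b₁ and b₀' = min(b₀ − a + 1, b_max) with probability α_min, b₀' = b₀ − a with probability 1 − α_min; if r = 1 then b₀' = b₀ and b₁' = min(b₁ − a + 1, b_max) with probability α_max, b₁' = b₁ − a with probability 1 − α_max. Then the chain is irreducible: for every pair of states s, s' ∈ S there exists n ≥ 1 such that the (s,s') entry of Qⁿ is strictly positive. -/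
/-- Transition matrix of the token-based two-constraint AoI Markov chain on
`{0,…,b_max}² × {1,…,Δ_max} × {0,1}` induced by the stationary policy that randomizes
uniformly over the feasible actions: the update action `a = 1` is feasible iff
(`r = 0` and `b₀ ≥ 1`) or (`r = 1` and `b₁ ≥ 1`); an update resets the AoI to `1` while
idling increases it to `min(Δ+1, Δ_max)`; requests are i.i.d. Bernoulli(`q`); when
`r = 0` (resp. `r = 1`) a type-0 (resp. type-1) token arrives with probability
`α_min` (resp. `α_max`), counts capped at `b_max`, and an update consumes one token of
the type matching `r`. -/
noncomputable def aoiKernel2 (bmax Δmax : ℕ) (αmin αmax q : ℝ) :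
    Matrix (Fin (bmax + 1) × Fin (bmax + 1) × {Δ : ℕ // Δ ∈ Finset.Icc 1 Δmax} × Fin 2)
           (Fin (bmax + 1) × Fin (bmax + 1) × {Δ : ℕ // Δ ∈ Finset.Icc 1 Δmax} × Fin 2)
           ℝ :=
  fun s s' =>
    let b0 : ℕ := s.1; let b1 : ℕ := s.2.1; let Δ : ℕ := s.2.2.1.1; let r : ℕ := s.2.2.2
    let b0' : ℕ := s'.1; let b1' : ℕ := s'.2.1; let Δ' : ℕ := s'.2.2.1.1
    let r' : ℕ := s'.2.2.2
    let P : ℕ → ℝ := fun a =>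
      (if r = 0 then
          (if b0' = min (b0 - a + 1) bmax then αmin else 0)
            + (if b0' = b0 - a then 1 - αmin else 0)
        else if b0' = b0 then 1 else 0)
      * (if r = 1 then
          (if b1' = min (b1 - a + 1) bmax then αmax else 0)
            + (if b1' = b1 - a then 1 - αmax else 0)
        else if b1' = b1 then 1 else 0)
      * (if a = 1 then (if Δ' = 1 then (1 : ℝ) else 0)
         else if Δ' = min (Δ + 1) Δmax then 1 else 0)
      * (if r' = 1 then q else 1 - q)
    if (r = 0 ∧ 1 ≤ b0) ∨ (r = 1 ∧ 1 ≤ b1) then (1 / 2) * P 0 + (1 / 2) * P 1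
    else P 0

/-- The state space. -/
abbrev AoISt (bmax Δmax : ℕ) :=
  Fin (bmax + 1) × Fin (bmax + 1) × {Δ : ℕ // Δ ∈ Finset.Icc 1 Δmax} × Fin 2

/-- Combinatorial one-step accessibility with action `a`. -/
def AoIStp (bmax Δmax : ℕ) (s s' : AoISt bmax Δmax) : Prop :=
  ∃ a : ℕ, (a = 0 ∨ (a = 1 ∧ (((s.2.2.2 : ℕ) = 0 ∧ 1 ≤ (s.1 : ℕ)) ∨
      ((s.2.2.2 : ℕ) = 1 ∧ 1 ≤ (s.2.1 : ℕ))))) ∧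
    (((s.2.2.2 : ℕ) = 0 ∧ (s'.2.1 : ℕ) = s.2.1 ∧
        ((s'.1 : ℕ) = min ((s.1 : ℕ) - a + 1) bmax ∨ (s'.1 : ℕ) = (s.1 : ℕ) - a)) ∨
     ((s.2.2.2 : ℕ) = 1 ∧ (s'.1 : ℕ) = s.1 ∧
        ((s'.2.1 : ℕ) = min ((s.2.1 : ℕ) - a + 1) bmax ∨ (s'.2.1 : ℕ) = (s.2.1 : ℕ) - a))) ∧
    ((a = 1 ∧ s'.2.2.1.1 = 1) ∨ (a = 0 ∧ s'.2.2.1.1 = min (s.2.2.1.1 + 1) Δmax))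

lemma aoi_ite_add_nonneg (p r : Prop) [Decidable p] [Decidable r] (x : ℝ)
    (h0 : 0 < x) (h1 : x < 1) :
    0 ≤ (if p then x else 0) + (if r then 1 - x else 0) := by
  split_ifs <;> linarith

lemma aoi_ite_add_pos (p r : Prop) [Decidable p] [Decidable r] (x : ℝ)
    (h0 : 0 < x) (h1 : x < 1) (h : p ∨ r) :
    0 < (if p then x else 0) + (if r then 1 - x else 0) := by
  split_ifs <;> first | linarith | tauto

lemma aoi_ite_nonneg (p : Prop) [Decidable p] : (0 : ℝ) ≤ if p then 1 else 0 := by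
  split_ifs <;> norm_num

section
variable (bmax Δmax : ℕ) (αmin αmax q : ℝ)

/-- The kernel given the action. -/
noncomputable def aoiP (s s' : AoISt bmax Δmax) (a : ℕ) : ℝ :=
  (if (s.2.2.2 : ℕ) = 0 then
      (if (s'.1 : ℕ) = min ((s.1 : ℕ) - a + 1) bmax then αmin else 0)
        + (if (s'.1 : ℕ) = (s.1 : ℕ) - a then 1 - αmin else 0)
    else if (s'.1 : ℕ) = s.1 then 1 else 0)
  * (if (s.2.2.2 : ℕ) = 1 then
      (if (s'.2.1 : ℕ) = min ((s.2.1 : ℕ) - a + 1) bmax then αmax else 0)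
        + (if (s'.2.1 : ℕ) = (s.2.1 : ℕ) - a then 1 - αmax else 0)
    else if (s'.2.1 : ℕ) = s.2.1 then 1 else 0)
  * (if a = 1 then (if s'.2.2.1.1 = 1 then (1 : ℝ) else 0)
     else if s'.2.2.1.1 = min (s.2.2.1.1 + 1) Δmax then 1 else 0)
  * (if (s'.2.2.2 : ℕ) = 1 then q else 1 - q)

lemma aoiKernel2_eq (s s' : AoISt bmax Δmax) :
    aoiKernel2 bmax Δmax αmin αmax q s s' =
    if ((s.2.2.2 : ℕ) = 0 ∧ 1 ≤ (s.1 : ℕ)) ∨ ((s.2.2.2 : ℕ) = 1 ∧ 1 ≤ (s.2.1 : ℕ)) then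
      (1 / 2) * aoiP bmax Δmax αmin αmax q s s' 0 + (1 / 2) * aoiP bmax Δmax αmin αmax q s s' 1
    else aoiP bmax Δmax αmin αmax q s s' 0 := rfl

variable {αmin αmax q}

lemma aoiP_nonneg
    (hmin : 0 < αmin) (hmin1 : αmin < 1)
    (hmax : 0 < αmax) (hmax1 : αmax < 1) (hq : 0 < q) (hq1 : q < 1)
    (s s' : AoISt bmax Δmax) (a : ℕ) :
    0 ≤ aoiP bmax Δmax αmin αmax q s s' a := by
  unfold aoiP
  refine mul_nonneg (mul_nonneg (mul_nonneg ?_ ?_) ?_) ?_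
  · split_ifs <;> linarith
  · split_ifs <;> linarith
  · split_ifs <;> linarith
  · split_ifs <;> linarith

lemma aoiKernel2_nonneg
    (hmin : 0 < αmin) (hmin1 : αmin < 1)
    (hmax : 0 < αmax) (hmax1 : αmax < 1) (hq : 0 < q) (hq1 : q < 1)
    (s s' : AoISt bmax Δmax) :
    0 ≤ aoiKernel2 bmax Δmax αmin αmax q s s' := by
  rw [aoiKernel2_eq]
  have h0 := aoiP_nonneg bmax Δmax hmin hmin1 hmax hmax1 hq hq1 s s' 0
  have h1 := aoiP_nonneg bmax Δmax hmin hmin1 hmax hmax1 hq hq1 s s' 1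
  split_ifs <;> linarith

lemma aoiKernel2_pos
    (hmin : 0 < αmin) (hmin1 : αmin < 1)
    (hmax : 0 < αmax) (hmax1 : αmax < 1) (hq : 0 < q) (hq1 : q < 1)
    (s s' : AoISt bmax Δmax) (h : AoIStp bmax Δmax s s') :
    0 < aoiKernel2 bmax Δmax αmin αmax q s s' := by
  rw [aoiKernel2_eq]
  have h0 := aoiP_nonneg bmax Δmax hmin hmin1 hmax hmax1 hq hq1 s s' 0
  have h1 := aoiP_nonneg bmax Δmax hmin hmin1 hmax hmax1 hq hq1 s s' 1
  obtain ⟨a, ha, hb, hd⟩ := h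
  have hp : 0 < aoiP bmax Δmax αmin αmax q s s' a := by
    unfold aoiP
    refine mul_pos (mul_pos (mul_pos ?_ ?_) ?_) ?_
    · rcases hb with ⟨hr, _, h⟩ | ⟨hr, h, _⟩
      · rw [if_pos hr]
        exact aoi_ite_add_pos _ _ _ hmin hmin1 h
      · rw [if_neg (by omega), if_pos h]
        norm_num
    · rcases hb with ⟨hr, h, _⟩ | ⟨hr, _, h⟩
      · rw [if_neg (by omega), if_pos h]
        norm_num
      · rw [if_pos hr]
        exact aoi_ite_add_pos _ _ _ hmax hmax1 h
    · rcases hd with ⟨h, h'⟩ | ⟨h, h'⟩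
      · rw [if_pos h, if_pos h']
        norm_num
      · rw [if_neg (by omega), if_pos h']
        norm_num
    · split_ifs <;> linarith
  rcases ha with rfl | ⟨rfl, hf⟩
  · split_ifs <;> linarith
  · rw [if_pos hf]
    linarith

lemma aoi_pow_nonneg
    (hmin : 0 < αmin) (hmin1 : αmin < 1)
    (hmax : 0 < αmax) (hmax1 : αmax < 1) (hq : 0 < q) (hq1 : q < 1)
    (n : ℕ) (s s' : AoISt bmax Δmax) :
    0 ≤ (aoiKernel2 bmax Δmax αmin αmax q ^ n) s s' := by
  induction n generalizing s' with
  | zero =>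
    rw [pow_zero, Matrix.one_apply]
    exact aoi_ite_nonneg _
  | succ n ih =>
    rw [pow_succ, Matrix.mul_apply]
    exact Finset.sum_nonneg fun t _ => mul_nonneg (ih t)
      (aoiKernel2_nonneg bmax Δmax hmin hmin1 hmax hmax1 hq hq1 t s')

lemma aoi_pow_pos
    (hmin : 0 < αmin) (hmin1 : αmin < 1)
    (hmax : 0 < αmax) (hmax1 : αmax < 1) (hq : 0 < q) (hq1 : q < 1)
    (s s' : AoISt bmax Δmax) (h : Relation.TransGen (AoIStp bmax Δmax) s s') :
    ∃ n : ℕ, 1 ≤ n ∧ 0 < (aoiKernel2 bmax Δmax αmin αmax q ^ n) s s' := by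
  induction h with
  | single h =>
    refine ⟨1, le_rfl, ?_⟩
    rw [pow_one]
    exact aoiKernel2_pos bmax Δmax hmin hmin1 hmax hmax1 hq hq1 _ _ h
  | @tail t u _ h ih =>
    obtain ⟨n, hn, hp⟩ := ih
    refine ⟨n + 1, by omega, ?_⟩
    rw [pow_succ, Matrix.mul_apply]
    refine Finset.sum_pos' (fun v _ => mul_nonneg
      (aoi_pow_nonneg bmax Δmax hmin hmin1 hmax hmax1 hq hq1 n s v)
      (aoiKernel2_nonneg bmax Δmax hmin hmin1 hmax hmax1 hq hq1 v u)) ⟨t, Finset.mem_univ _, ?_⟩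
    exact mul_pos hp (aoiKernel2_pos bmax Δmax hmin hmin1 hmax hmax1 hq hq1 _ _ h)

end

section
variable {bmax Δmax : ℕ}

/-- The age after idling. -/
def aoiNext (d : {Δ : ℕ // Δ ∈ Finset.Icc 1 Δmax}) : {Δ : ℕ // Δ ∈ Finset.Icc 1 Δmax} :=
  ⟨min (d.1 + 1) Δmax, by have := d.2; simp only [Finset.mem_Icc] at *; omega⟩

/-- The age 1. -/
def aoiOne (d : {Δ : ℕ // Δ ∈ Finset.Icc 1 Δmax}) : {Δ : ℕ // Δ ∈ Finset.Icc 1 Δmax} :=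
  ⟨1, by have := d.2; simp only [Finset.mem_Icc] at *; omega⟩

lemma aoi_idle (x y : Fin (bmax + 1)) (d : {Δ : ℕ // Δ ∈ Finset.Icc 1 Δmax}) (r r' : Fin 2) :
    AoIStp bmax Δmax (x, y, d, r) (x, y, aoiNext d, r') := by
  refine ⟨0, Or.inl rfl, ?_, Or.inr ⟨rfl, rfl⟩⟩
  fin_cases r
  · exact Or.inl ⟨rfl, rfl, Or.inr rfl⟩
  · exact Or.inr ⟨rfl, rfl, Or.inr rfl⟩

lemma aoi_down0 (x : ℕ) (hx : x < bmax + 1) (y : Fin (bmax + 1))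
    (d : {Δ : ℕ // Δ ∈ Finset.Icc 1 Δmax}) :
    ∃ d', Relation.ReflTransGen (AoIStp bmax Δmax) (⟨x, hx⟩, y, d, 0)
      (⟨0, by omega⟩, y, d', 0) := by
  induction x generalizing d with
  | zero => exact ⟨d, .refl⟩
  | succ x ih =>
    obtain ⟨d', h⟩ := ih (by omega) (aoiOne d)
    refine ⟨d', .head ?_ h⟩
    refine ⟨1, Or.inr ⟨rfl, ?_⟩, ?_, Or.inl ⟨rfl, rfl⟩⟩ <;> simp

lemma aoi_down1 (x : Fin (bmax + 1)) (y : ℕ) (hy : y < bmax + 1)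
    (d : {Δ : ℕ // Δ ∈ Finset.Icc 1 Δmax}) :
    ∃ d', Relation.ReflTransGen (AoIStp bmax Δmax) (x, ⟨y, hy⟩, d, 1)
      (x, ⟨0, by omega⟩, d', 1) := by
  induction y generalizing d with
  | zero => exact ⟨d, .refl⟩
  | succ y ih =>
    obtain ⟨d', h⟩ := ih (by omega) (aoiOne d)
    refine ⟨d', .head ?_ h⟩
    refine ⟨1, Or.inr ⟨rfl, ?_⟩, ?_, Or.inl ⟨rfl, rfl⟩⟩ <;> simp

lemma aoi_up0 (x : ℕ) (hx : x < bmax + 1) (y : Fin (bmax + 1))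
    (d : {Δ : ℕ // Δ ∈ Finset.Icc 1 Δmax}) :
    ∃ d', Relation.ReflTransGen (AoIStp bmax Δmax) (⟨0, by omega⟩, y, d, 0)
      (⟨x, hx⟩, y, d', 0) := by
  induction x with
  | zero => exact ⟨d, .refl⟩
  | succ x ih =>
    obtain ⟨d', h⟩ := ih (by omega)
    refine ⟨aoiNext d', .tail h ?_⟩
    refine ⟨0, Or.inl rfl, Or.inl ⟨rfl, rfl, Or.inl ?_⟩, Or.inr ⟨rfl, rfl⟩⟩
    simp only
    omega

lemma aoi_up1 (x : Fin (bmax + 1)) (y : ℕ) (hy : y < bmax + 1)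
    (d : {Δ : ℕ // Δ ∈ Finset.Icc 1 Δmax}) :
    ∃ d', Relation.ReflTransGen (AoIStp bmax Δmax) (x, ⟨0, by omega⟩, d, 1)
      (x, ⟨y, hy⟩, d', 1) := by
  induction y with
  | zero => exact ⟨d, .refl⟩
  | succ y ih =>
    obtain ⟨d', h⟩ := ih (by omega)
    refine ⟨aoiNext d', .tail h ?_⟩
    refine ⟨0, Or.inl rfl, Or.inr ⟨rfl, rfl, Or.inl ?_⟩, Or.inr ⟨rfl, rfl⟩⟩
    simp only
    omega

lemma aoi_age (x y : Fin (bmax + 1)) (r : Fin 2) (k : ℕ) (hk : k + 1 ∈ Finset.Icc 1 Δmax) :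
    Relation.ReflTransGen (AoIStp bmax Δmax) (x, y, aoiOne ⟨k + 1, hk⟩, r)
      (x, y, ⟨k + 1, hk⟩, r) := by
  induction k with
  | zero => exact .refl
  | succ k ih =>
    have hk' : k + 1 ∈ Finset.Icc 1 Δmax := by
      simp only [Finset.mem_Icc] at *
      omega
    refine .tail (ih hk') ?_
    have := aoi_idle (bmax := bmax) x y ⟨k + 1, hk'⟩ r r
    have e : aoiNext ⟨k + 1, hk'⟩ = (⟨k + 1 + 1, hk⟩ : {Δ : ℕ // Δ ∈ Finset.Icc 1 Δmax}) := by
      apply Subtype.ext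
      have hk2 := Finset.mem_Icc.1 hk
      change min (k + 1 + 1) Δmax = k + 1 + 1
      omega
    rwa [e] at this

lemma aoi_reach (hb : 1 ≤ bmax) (s s' : AoISt bmax Δmax) :
    Relation.TransGen (AoIStp bmax Δmax) s s' := by
  obtain ⟨x, y, d, r⟩ := s
  obtain ⟨⟨x', hx'⟩, ⟨y', hy'⟩, ⟨k, hk⟩, r'⟩ := s'
  obtain ⟨d1, h1⟩ := aoi_down0 x.1 x.2 y (aoiNext d)
  obtain ⟨d2, h2⟩ := aoi_down1 ⟨0, by omega⟩ y.1 y.2 (aoiNext d1)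
  obtain ⟨d3, h3⟩ := aoi_up1 ⟨0, by omega⟩ y' hy' d2
  obtain ⟨d4, h4⟩ := aoi_up0 (max x' 1) (by omega) ⟨y', hy'⟩ (aoiNext d3)
  obtain ⟨k, rfl⟩ : ∃ j, k = j + 1 := ⟨k - 1, by simp only [Finset.mem_Icc] at hk; omega⟩
  have h6 := aoi_age ⟨x', hx'⟩ ⟨y', hy'⟩ r' k hk
  have h5 : AoIStp bmax Δmax (⟨max x' 1, by omega⟩, ⟨y', hy'⟩, d4, 0)
      (⟨x', hx'⟩, ⟨y', hy'⟩, aoiOne ⟨k + 1, hk⟩, r') := by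
    refine ⟨1, Or.inr ⟨rfl, Or.inl ⟨rfl, ?_⟩⟩, Or.inl ⟨rfl, rfl, ?_⟩, Or.inl ⟨rfl, rfl⟩⟩
    · simp only
      omega
    · simp only
      omega
  refine .head' (aoi_idle x y d r 0) (h1.trans ?_)
  refine .head (aoi_idle _ _ d1 0 1) (h2.trans (h3.trans ?_))
  exact .head (aoi_idle _ _ d3 1 0) (h4.trans (.head h5 h6))

end

/-- Proposition 3 of the paper: for `b_max ≥ 1`, `Δ_max ≥ 1` and
`α_min, α_max, q ∈ (0,1)`, the token-based two-constraint AoI chain under the uniformly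
randomized stationary policy is irreducible: every state `s'` is reachable from every
state `s`, i.e. some power of the transition matrix has a positive `(s,s')` entry. -/
theorem aoiKernel2_irreducible (bmax Δmax : ℕ) (hb : 1 ≤ bmax) (hΔ : 1 ≤ Δmax)
    (αmin αmax q : ℝ) (hmin : 0 < αmin) (hmin1 : αmin < 1)
    (hmax : 0 < αmax) (hmax1 : αmax < 1) (hq : 0 < q) (hq1 : q < 1) :
    ∀ s s' : Fin (bmax + 1) × Fin (bmax + 1) × {Δ : ℕ // Δ ∈ Finset.Icc 1 Δmax} × Fin 2,
      ∃ n : ℕ, 1 ≤ n ∧ 0 < (aoiKernel2 bmax Δmax αmin αmax q ^ n) s s' := by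
  intro s s'
  exact aoi_pow_pos bmax Δmax hmin hmin1 hmax hmax1 hq hq1 s s' (aoi_reach hb s s')
end

section
/- Let b_max ≥ 1 and Δ_max ≥ 1 be integers and let α_min, α_max, q ∈ [0,1] be reals. On the state space S = {0,…,b_max}² × {1,…,Δ_max} × {0,1}, define the value-iteration sequence V_0, V_1, V_2, … : S → ℝ by V_0 ≡ 0 and V_{k+1}(b₀,b₁,Δ,r) = Δ + min over feasible actions a of E[V_k(b₀',b₁',Δ',r')], where a = 1 is feasible iff (r = 0 and b₀ ≥ 1) or (r = 1 and b₁ ≥ 1), a = 0 is always feasible, and the next-state distribution given a is: Δ' = 1 if a = 1 and Δ' = min(Δ+1, Δ_max) if a = 0; r' = 1 with probability q and r' = 0 with probability 1 − q, independently; if r = 0 then b₁' = b₁ and b₀' = min(b₀ − a + 1, b_max) with probability α_min, b₀' = b₀ − a with probability 1 − α_min; if r = 1 then b₀' = b₀ and b₁' = min(b₁ − a + 1, b_max) with probability α_max, b₁' = b₁ − a with probability 1 − α_max. Then for every k ≥ 0 and every fixed (b₀,b₁,r), the map Δ ↦ V_k(b₀,b₁,Δ,r) is nondecreasing on {1,…,Δ_max}.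 -/
/-- Expected next-step value `E[V(b₀',b₁',Δ',r')]` of action `a ∈ {0,1}` in state
`(b₀,b₁,Δ,r)` of the token-based two-constraint AoI MDP: an update (`a = 1`) resets the
AoI to `1` while idling yields `min(Δ+1, Δ_max)`; the next request is Bernoulli(`q`);
if `r = 0` then `b₁' = b₁` and `b₀' = min(b₀ − a + 1, b_max)` w.p. `α_min`,
`b₀' = b₀ − a` w.p. `1 − α_min`; symmetrically with `α_max` if `r = 1`. -/
noncomputable def expVal (bmax Δmax : ℕ) (αmin αmax q : ℝ)
    (V : ℕ → ℕ → ℕ → ℕ → ℝ) (a b0 b1 Δ r : ℕ) : ℝ :=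
  let nΔ : ℕ := if a = 1 then 1 else min (Δ + 1) Δmax
  if r = 0 then
    αmin * (q * V (min (b0 - a + 1) bmax) b1 nΔ 1 + (1 - q) * V (min (b0 - a + 1) bmax) b1 nΔ 0)
      + (1 - αmin) * (q * V (b0 - a) b1 nΔ 1 + (1 - q) * V (b0 - a) b1 nΔ 0)
  else
    αmax * (q * V b0 (min (b1 - a + 1) bmax) nΔ 1 + (1 - q) * V b0 (min (b1 - a + 1) bmax) nΔ 0)
      + (1 - αmax) * (q * V b0 (b1 - a) nΔ 1 + (1 - q) * V b0 (b1 - a) nΔ 0)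

/-- The update action is feasible iff (`r = 0` and `b₀ ≥ 1`) or (`r = 1` and `b₁ ≥ 1`). -/
def updFeasible (b0 b1 r : ℕ) : Prop := (r = 0 ∧ 1 ≤ b0) ∨ (r = 1 ∧ 1 ≤ b1)

instance (b0 b1 r : ℕ) : Decidable (updFeasible b0 b1 r) := by
  unfold updFeasible; infer_instance

/-- The value-iteration sequence of the token-based two-constraint AoI MDP:
`V_0 ≡ 0` and `V_{k+1}(b₀,b₁,Δ,r) = Δ + min over feasible actions a of
E[V_k(next state)]` (the idle action `a = 0` is always feasible). -/
noncomputable def vitTwo (bmax Δmax : ℕ) (αmin αmax q : ℝ) :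
    ℕ → ℕ → ℕ → ℕ → ℕ → ℝ
  | 0 => fun _ _ _ _ => 0
  | (k + 1) => fun b0 b1 Δ r =>
      (Δ : ℝ) +
        (if updFeasible b0 b1 r then
          min (expVal bmax Δmax αmin αmax q (vitTwo bmax Δmax αmin αmax q k) 0 b0 b1 Δ r)
              (expVal bmax Δmax αmin αmax q (vitTwo bmax Δmax αmin αmax q k) 1 b0 b1 Δ r)
         else expVal bmax Δmax αmin αmax q (vitTwo bmax Δmax αmin αmax q k) 0 b0 b1 Δ r)

/-- For `b_max ≥ 1`, `Δ_max ≥ 1` and `α_min, α_max, q ∈ [0,1]`, every iterate `V_k` of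
the two-constraint value iteration is nondecreasing in the age `Δ` on `{1,…,Δ_max}`,
for every fixed `(b₀,b₁,r)` in the state space. -/
theorem vitTwo_monotone_age (bmax Δmax : ℕ) (hb : 1 ≤ bmax) (hΔ : 1 ≤ Δmax)
    (αmin αmax q : ℝ) (hmin0 : 0 ≤ αmin) (hmin1 : αmin ≤ 1)
    (hmax0 : 0 ≤ αmax) (hmax1 : αmax ≤ 1) (hq0 : 0 ≤ q) (hq1 : q ≤ 1) :
    ∀ k b0 b1 r : ℕ, b0 ≤ bmax → b1 ≤ bmax → r ≤ 1 →
      ∀ Δ1 Δ2 : ℕ, 1 ≤ Δ1 → Δ1 ≤ Δ2 → Δ2 ≤ Δmax →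
        vitTwo bmax Δmax αmin αmax q k b0 b1 Δ1 r
          ≤ vitTwo bmax Δmax αmin αmax q k b0 b1 Δ2 r := by
  have hmin1' : 0 ≤ 1 - αmin := sub_nonneg.2 hmin1
  have hmax1' : 0 ≤ 1 - αmax := sub_nonneg.2 hmax1
  have hq1' : 0 ≤ 1 - q := sub_nonneg.2 hq1
  intro k
  induction k with
  | zero => intros; simp [vitTwo]
  | succ k ih =>
    intro b0 b1 r hb0 hb1 hr Δ1 Δ2 h1 h12 h2
    have hV : ∀ c0 c1 s : ℕ, c0 ≤ bmax → c1 ≤ bmax → s ≤ 1 →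
        vitTwo bmax Δmax αmin αmax q k c0 c1 (min (Δ1 + 1) Δmax) s
          ≤ vitTwo bmax Δmax αmin αmax q k c0 c1 (min (Δ2 + 1) Δmax) s := by
      intro c0 c1 s hc0 hc1 hs
      exact ih c0 c1 s hc0 hc1 hs _ _ (by omega) (by omega) (by omega)
    have hidle : expVal bmax Δmax αmin αmax q (vitTwo bmax Δmax αmin αmax q k) 0 b0 b1 Δ1 r
        ≤ expVal bmax Δmax αmin αmax q (vitTwo bmax Δmax αmin αmax q k) 0 b0 b1 Δ2 r := by
      have mix : ∀ (p x y x' y' : ℝ), 0 ≤ p → 0 ≤ 1 - p → x ≤ x' → y ≤ y' →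
          p * x + (1 - p) * y ≤ p * x' + (1 - p) * y' := by
        intro p x y x' y' hp hp' hx hy
        exact add_le_add (mul_le_mul_of_nonneg_left hx hp) (mul_le_mul_of_nonneg_left hy hp')
      simp only [expVal, zero_ne_one, if_false]
      split_ifs
      · apply mix _ _ _ _ _ hmin0 hmin1' <;> apply mix _ _ _ _ _ hq0 hq1' <;>
          apply hV <;> omega
      · apply mix _ _ _ _ _ hmax0 hmax1' <;> apply mix _ _ _ _ _ hq0 hq1' <;>
          apply hV <;> omega
    have hupd : expVal bmax Δmax αmin αmax q (vitTwo bmax Δmax αmin αmax q k) 1 b0 b1 Δ1 r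
        = expVal bmax Δmax αmin αmax q (vitTwo bmax Δmax αmin αmax q k) 1 b0 b1 Δ2 r := by
      simp [expVal]
    have hc : (Δ1 : ℝ) ≤ Δ2 := by exact_mod_cast h12
    simp only [vitTwo]
    apply add_le_add hc
    split_ifs
    · exact min_le_min hidle hupd.le
    · exact hidle
end

section
/- In the setting of the two-constraint value-iteration sequence V_k, for every k ≥ 0 and every state (b₀,b₁,Δ,r) at which the update action is feasible (i.e., r = 0 and b₀ ≥ 1, or r = 1 and b₁ ≥ 1), define V¹_{k+1}(b₀,b₁,Δ,r) = E[V_k(next state) | action a = 1] and V⁰_{k+1}(b₀,b₁,Δ,r) = E[V_k(next state) | action a = 0], and DV_{k+1} = V¹_{k+1} − V⁰_{k+1}. Then: (i) V¹_{k+1}(b₀,b₁,Δ,r) does not depend on Δ; (ii) Δ ↦ DV_{k+1}(b₀,b₁,Δ,r) is nonincreasing on {1,…,Δ_max}; and (iii) for every (b₀,b₁,r) the set {Δ ∈ {1,…,Δ_max} : DV_{k+1}(b₀,b₁,Δ,r) < 0} is upward closed in {1,…,Δ_max}, i.e., there exists a threshold Δ_T such that the value-iteration greedy policy transmits exactly when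 Δ ≥ Δ_T (the optimal policy of the token-based two-constraint MDP is a threshold policy in the age, Theorem 2 of the paper). -/
theorem expVal_one_const (bmax Δmax : ℕ) (αmin αmax q : ℝ)
    (V : ℕ → ℕ → ℕ → ℕ → ℝ) (b0 b1 Δ1 Δ2 r : ℕ) :
    expVal bmax Δmax αmin αmax q V 1 b0 b1 Δ1 r
      = expVal bmax Δmax αmin αmax q V 1 b0 b1 Δ2 r := by
  simp [expVal]

theorem expVal_zero_mono (bmax Δmax : ℕ)
    (αmin αmax q : ℝ) (hmin0 : 0 ≤ αmin) (hmin1 : αmin ≤ 1)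
    (hmax0 : 0 ≤ αmax) (hmax1 : αmax ≤ 1) (hq0 : 0 ≤ q) (hq1 : q ≤ 1)
    (V : ℕ → ℕ → ℕ → ℕ → ℝ)
    (hV : ∀ b0 b1 r Δ1 Δ2 : ℕ, Δ1 ≤ Δ2 → V b0 b1 Δ1 r ≤ V b0 b1 Δ2 r)
    (b0 b1 r Δ1 Δ2 : ℕ) (h : Δ1 ≤ Δ2) :
    expVal bmax Δmax αmin αmax q V 0 b0 b1 Δ1 r
      ≤ expVal bmax Δmax αmin αmax q V 0 b0 b1 Δ2 r := by
  have hm : min (Δ1 + 1) Δmax ≤ min (Δ2 + 1) Δmax := by omega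
  have h1 : 0 ≤ 1 - αmin := by linarith
  have h2 : 0 ≤ 1 - αmax := by linarith
  have h3 : 0 ≤ 1 - q := by linarith
  have key : ∀ c0 c1 : ℕ,
      q * V c0 c1 (min (Δ1 + 1) Δmax) 1 + (1 - q) * V c0 c1 (min (Δ1 + 1) Δmax) 0
        ≤ q * V c0 c1 (min (Δ2 + 1) Δmax) 1 + (1 - q) * V c0 c1 (min (Δ2 + 1) Δmax) 0 :=
    fun c0 c1 => add_le_add
      (mul_le_mul_of_nonneg_left (hV c0 c1 1 _ _ hm) hq0)
      (mul_le_mul_of_nonneg_left (hV c0 c1 0 _ _ hm) h3)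
  simp only [expVal, zero_ne_one, if_false]
  split_ifs
  · exact add_le_add (mul_le_mul_of_nonneg_left (key _ _) hmin0)
      (mul_le_mul_of_nonneg_left (key _ _) h1)
  · exact add_le_add (mul_le_mul_of_nonneg_left (key _ _) hmax0)
      (mul_le_mul_of_nonneg_left (key _ _) h2)

theorem vitTwo_mono (bmax Δmax : ℕ)
    (αmin αmax q : ℝ) (hmin0 : 0 ≤ αmin) (hmin1 : αmin ≤ 1)
    (hmax0 : 0 ≤ αmax) (hmax1 : αmax ≤ 1) (hq0 : 0 ≤ q) (hq1 : q ≤ 1) (k : ℕ) :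
    ∀ b0 b1 r Δ1 Δ2 : ℕ, Δ1 ≤ Δ2 →
      vitTwo bmax Δmax αmin αmax q k b0 b1 Δ1 r
        ≤ vitTwo bmax Δmax αmin αmax q k b0 b1 Δ2 r := by
  induction k with
  | zero => intros; simp [vitTwo]
  | succ k ih =>
    intro b0 b1 r Δ1 Δ2 h
    have hz := expVal_zero_mono bmax Δmax αmin αmax q hmin0 hmin1 hmax0 hmax1 hq0 hq1
      _ ih b0 b1 r Δ1 Δ2 h
    have ho := expVal_one_const bmax Δmax αmin αmax q
      (vitTwo bmax Δmax αmin αmax q k) b0 b1 Δ1 Δ2 r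
    have hc : (Δ1 : ℝ) ≤ Δ2 := by exact_mod_cast h
    simp only [vitTwo]
    split_ifs
    · exact add_le_add hc (min_le_min hz ho.le)
    · exact add_le_add hc hz

/-- Theorem 2 of the paper, via value iteration. With
`V¹_{k+1}(b₀,b₁,Δ,r) = E[V_k(next state) | a = 1]`,
`V⁰_{k+1}(b₀,b₁,Δ,r) = E[V_k(next state) | a = 0]` and
`DV_{k+1} = V¹_{k+1} − V⁰_{k+1}`, for every `k ≥ 0` and every state of
`{0,…,b_max}² × {1,…,Δ_max} × {0,1}` at which the update action is feasible:
(i) `V¹_{k+1}` does not depend on `Δ`; (ii) `Δ ↦ DV_{k+1}` is nonincreasing on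
`{1,…,Δ_max}`; (iii) `{Δ : DV_{k+1}(b₀,b₁,Δ,r) < 0}` is upward closed in
`{1,…,Δ_max}`, i.e. the greedy policy is a threshold policy in the age. -/
theorem vitTwo_threshold (bmax Δmax : ℕ) (hb : 1 ≤ bmax) (hΔ : 1 ≤ Δmax)
    (αmin αmax q : ℝ) (hmin0 : 0 ≤ αmin) (hmin1 : αmin ≤ 1)
    (hmax0 : 0 ≤ αmax) (hmax1 : αmax ≤ 1) (hq0 : 0 ≤ q) (hq1 : q ≤ 1) :
    (∀ k b0 b1 r : ℕ, b0 ≤ bmax → b1 ≤ bmax → r ≤ 1 → updFeasible b0 b1 r →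
      ∀ Δ1 Δ2 : ℕ, 1 ≤ Δ1 → Δ1 ≤ Δmax → 1 ≤ Δ2 → Δ2 ≤ Δmax →
        expVal bmax Δmax αmin αmax q (vitTwo bmax Δmax αmin αmax q k) 1 b0 b1 Δ1 r
          = expVal bmax Δmax αmin αmax q (vitTwo bmax Δmax αmin αmax q k) 1 b0 b1 Δ2 r)
    ∧ (∀ k b0 b1 r : ℕ, b0 ≤ bmax → b1 ≤ bmax → r ≤ 1 → updFeasible b0 b1 r →
      ∀ Δ1 Δ2 : ℕ, 1 ≤ Δ1 → Δ1 ≤ Δ2 → Δ2 ≤ Δmax →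
        expVal bmax Δmax αmin αmax q (vitTwo bmax Δmax αmin αmax q k) 1 b0 b1 Δ2 r
            - expVal bmax Δmax αmin αmax q (vitTwo bmax Δmax αmin αmax q k) 0 b0 b1 Δ2 r
          ≤ expVal bmax Δmax αmin αmax q (vitTwo bmax Δmax αmin αmax q k) 1 b0 b1 Δ1 r
            - expVal bmax Δmax αmin αmax q (vitTwo bmax Δmax αmin αmax q k) 0 b0 b1 Δ1 r)
    ∧ (∀ k b0 b1 r : ℕ, b0 ≤ bmax → b1 ≤ bmax → r ≤ 1 → updFeasible b0 b1 r →
      ∀ Δ1 Δ2 : ℕ, 1 ≤ Δ1 → Δ1 ≤ Δ2 → Δ2 ≤ Δmax →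
        expVal bmax Δmax αmin αmax q (vitTwo bmax Δmax αmin αmax q k) 1 b0 b1 Δ1 r
            - expVal bmax Δmax αmin αmax q (vitTwo bmax Δmax αmin αmax q k) 0 b0 b1 Δ1 r < 0 →
        expVal bmax Δmax αmin αmax q (vitTwo bmax Δmax αmin αmax q k) 1 b0 b1 Δ2 r
            - expVal bmax Δmax αmin αmax q (vitTwo bmax Δmax αmin αmax q k) 0 b0 b1 Δ2 r < 0) := by
  have hz := fun k => expVal_zero_mono bmax Δmax αmin αmax q hmin0 hmin1 hmax0 hmax1 hq0 hq1
    _ (vitTwo_mono bmax Δmax αmin αmax q hmin0 hmin1 hmax0 hmax1 hq0 hq1 k)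
  have ho := fun k => expVal_one_const bmax Δmax αmin αmax q (vitTwo bmax Δmax αmin αmax q k)
  refine ⟨?_, ?_, ?_⟩
  · intro k b0 b1 r _ _ _ _ Δ1 Δ2 _ _ _ _
    exact ho k b0 b1 Δ1 Δ2 r
  · intro k b0 b1 r _ _ _ _ Δ1 Δ2 _ h _
    linarith [hz k b0 b1 r Δ1 Δ2 h, ho k b0 b1 Δ1 Δ2 r]
  · intro k b0 b1 r _ _ _ _ Δ1 Δ2 _ h _ hn
    linarith [hz k b0 b1 r Δ1 Δ2 h, ho k b0 b1 Δ1 Δ2 r]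
end
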